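/- Let p > 3 be a prime. Then ∑_{k=0}^{(p-1)/2} (21k + 8) · C(2k,k)³ ≡ 8p + (-1)^{(p-1)/2} · 32·p³·E_{p-3} (mod p⁴), as a congruence of rational numbers whose denominators are coprime to p (indeed of integers up to the term involving E_{p-3}). -/

import Mathlib

/-- `H n` is the harmonic number `∑_{k=1}^n 1/k`. -/
def H (n : ℕ) : ℚ := ∑ k ∈ Finset.Icc 1 n, (1 : ℚ) / k

/-- `H2 n` is the second-order harmonic number `∑_{k=1}^n 1/k²`. -/
def H2 (n : ℕ) : ℚ := ∑ k ∈ Finset.Icc 1 n, (1 : ℚ) / k ^ 2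

/-- The Euler numbers: `E 0 = 1` and `∑_{0 ≤ k ≤ n, k even} C(n,k) E_{n-k} = 0` for `n ≥ 1`. -/
def eulerNumber : ℕ → ℚ
  | 0 => 1
  | n + 1 =>
      -∑ j ∈ (Finset.range (n + 1)).attach,
        if Even (n + 1 - j.1) then ((n + 1).choose (n + 1 - j.1) : ℚ) * eulerNumber j.1 else 0
decreasing_by exact Finset.mem_range.mp j.2

/-- For rationals, `a ≡ b (mod m)` : `m` divides the numerator of `a - b` in lowest terms. -/
def ratModEq (m : ℕ) (a b : ℚ) : Prop := (m : ℤ) ∣ (a - b).num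




/-- The hypergeometric term `C(2n+1,k) C(3n+1-k,n)` (for `k ≤ n+1`). -/
def ss (n k : ℕ) : ℚ :=
  ((2 * n + 1).factorial * (3 * n + 1 - k).factorial : ℚ) /
    (k.factorial * ((2 * n + 1 - k).factorial : ℚ) ^ 2 * n.factorial)

lemma ss_succ_right (K r : ℕ) :
    ss (K + r) (K + 1) * ((K + 1) * (2 * K + 3 * r + 1)) =
      ss (K + r) K * (K + 2 * r + 1) ^ 2 := by
  unfold ss
  have e1 : 3 * (K + r) + 1 - (K + 1) = 2 * K + 3 * r := by omega
  have e2 : 2 * (K + r) + 1 - (K + 1) = K + 2 * r := by omega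
  have e3 : 3 * (K + r) + 1 - K = 2 * K + 3 * r + 1 := by omega
  have e4 : 2 * (K + r) + 1 - K = K + 2 * r + 1 := by omega
  rw [e1, e2, e3, e4, Nat.factorial_succ K, Nat.factorial_succ (2 * K + 3 * r),
    Nat.factorial_succ (K + 2 * r)]
  have h1 := Nat.factorial_ne_zero K
  have h2 := Nat.factorial_ne_zero (K + 2 * r)
  have h3 := Nat.factorial_ne_zero (K + r)
  push_cast
  have h4 : (K + 1 : ℚ) ≠ 0 := by positivity
  have h5 : (K + 2 * r + 1 : ℚ) ≠ 0 := by positivity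
  field_simp

lemma ss_succ_left (K r : ℕ) :
    ss (K + r + 1) K * ((K + r + 1) * ((K + 2 * r + 3) ^ 2 * (K + 2 * r + 2) ^ 2)) =
      ss (K + r) K * ((2 * (K + r) + 3) * (2 * (K + r) + 2) *
        ((2 * K + 3 * r + 4) * (2 * K + 3 * r + 3) * (2 * K + 3 * r + 2))) := by
  unfold ss
  have e1 : 3 * (K + r + 1) + 1 - K = 2 * K + 3 * r + 1 + 1 + 1 + 1 := by omega
  have e2 : 2 * (K + r + 1) + 1 - K = K + 2 * r + 1 + 1 + 1 := by omega
  have e3 : 3 * (K + r) + 1 - K = 2 * K + 3 * r + 1 := by omega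
  have e4 : 2 * (K + r) + 1 - K = K + 2 * r + 1 := by omega
  have e5 : 2 * (K + r + 1) + 1 = 2 * (K + r) + 1 + 1 + 1 := by omega
  rw [e1, e2, e3, e4, e5, Nat.factorial_succ (2 * (K + r) + 1 + 1),
    Nat.factorial_succ (2 * (K + r) + 1), Nat.factorial_succ (2 * K + 3 * r + 1 + 1 + 1),
    Nat.factorial_succ (2 * K + 3 * r + 1 + 1), Nat.factorial_succ (2 * K + 3 * r + 1),
    Nat.factorial_succ (K + 2 * r + 1 + 1), Nat.factorial_succ (K + 2 * r + 1),
    Nat.factorial_succ (K + r)]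
  have h1 := Nat.factorial_ne_zero K
  have h2 := Nat.factorial_ne_zero (K + 2 * r + 1)
  have h3 := Nat.factorial_ne_zero (K + r)
  push_cast
  have h4 : (K + r + 1 : ℚ) ≠ 0 := by positivity
  have h5 : (K + 2 * r + 1 + 1 : ℚ) ≠ 0 := by positivity
  have h6 : (K + 2 * r + 1 + 1 + 1 : ℚ) ≠ 0 := by positivity
  field_simp
  ring

/-- Polynomial part of the Gosper certificate. -/
def certP (m k : ℚ) : ℚ :=
  448 * m ^ 3 + 1696 * m ^ 2 + 2112 * m + 864 - (352 * m ^ 2 + 896 * m + 564) * k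
    + (80 * m + 104) * k ^ 2 - 4 * k ^ 3

/-- The telescoping antidifference. -/
def certG (n k : ℕ) : ℚ :=
  (-1) ^ (n + k) * ss n k * (k * (3 * n + 2 - k) * certP n k) /
    ((2 * n + 3 - k) ^ 2 * (2 * n + 2 - k) ^ 2)

lemma cert_sum (n K : ℕ) (hK : K ≤ n + 1) :
    ∑ k ∈ Finset.range K, (8 * (2 * n + 3) * ((-1) ^ (n + 1 + k) * ss (n + 1) k)
      - 4 * (n + 1) * ((-1) ^ (n + k) * ss n k)) = certG n K := by
  induction K with
  | zero => simp [certG]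
  | succ K ih =>
    rw [Finset.sum_range_succ, ih (by omega)]
    obtain ⟨r, rfl⟩ := Nat.exists_eq_add_of_le (show K ≤ n by omega)
    have h1 := ss_succ_right K r
    have h2 := ss_succ_left K r
    have p1 : ((K : ℚ) + 1) * (2 * K + 3 * r + 1) ≠ 0 := by positivity
    have p2 : ((K : ℚ) + r + 1) * ((K + 2 * r + 3) ^ 2 * (K + 2 * r + 2) ^ 2) ≠ 0 := by positivity
    rw [← eq_div_iff p1] at h1
    rw [← eq_div_iff p2] at h2
    unfold certG
    rw [h1, h2]
    have q1 : (K + 2 * r + 1 : ℚ) ≠ 0 := by positivity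
    have q2 : (K + 2 * r + 2 : ℚ) ≠ 0 := by positivity
    have q3 : (K + 2 * r + 3 : ℚ) ≠ 0 := by positivity
    have q4 : (K + 1 : ℚ) ≠ 0 := by positivity
    have q5 : (2 * K + 3 * r + 1 : ℚ) ≠ 0 := by positivity
    have q6 : (K + r + 1 : ℚ) ≠ 0 := by positivity
    push_cast
    have w1 : (2 * ((K : ℚ) + r) + 3 - K) = K + 2 * r + 3 := by ring
    have w2 : (2 * ((K : ℚ) + r) + 2 - K) = K + 2 * r + 2 := by ring
    have w3 : (2 * ((K : ℚ) + r) + 3 - (K + 1)) = K + 2 * r + 2 := by ring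
    have w4 : (2 * ((K : ℚ) + r) + 2 - (K + 1)) = K + 2 * r + 1 := by ring
    have w5 : (3 * ((K : ℚ) + r) + 2 - (K + 1)) = 2 * K + 3 * r + 1 := by ring
    rw [w1, w2, w3, w4, w5]
    generalize ss (K + r) K = s
    have t1 : ((-1 : ℚ)) ^ (K + r + (K + 1)) = - (-1) ^ (K + r + K) := by
      rw [← add_assoc, pow_succ]; ring
    have t2 : ((-1 : ℚ)) ^ (K + r + 1 + K) = - (-1) ^ (K + r + K) := by
      rw [show K + r + 1 + K = K + r + K + 1 by omega, pow_succ]; ring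
    rw [t1, t2]
    generalize ((-1 : ℚ)) ^ (K + r + K) = e
    unfold certP
    field_simp
    ring

/-- The alternating sum. -/
def WW (n : ℕ) : ℚ := ∑ k ∈ Finset.range (n + 1), (-1) ^ (n + k) * ss n k

lemma WW_rec (n : ℕ) : 8 * (2 * n + 3) * WW (n + 1) - 4 * (n + 1) * WW n =
    (21 * n + 29) * ((2 * (n + 1)).choose (n + 1) : ℚ) ^ 2 := by
  have h := cert_sum n (n + 1) le_rfl
  rw [Finset.sum_sub_distrib, ← Finset.mul_sum, ← Finset.mul_sum] at h
  have h' : 8 * (2 * n + 3) * WW (n + 1) - 4 * (n + 1) * WW n =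
      certG n (n + 1) + 8 * (2 * n + 3) * ss (n + 1) (n + 1) := by
    rw [← h]
    unfold WW
    rw [Finset.sum_range_succ _ (n + 1)]
    have : ((-1 : ℚ)) ^ (n + 1 + (n + 1)) = 1 := Even.neg_one_pow ⟨n + 1, rfl⟩
    rw [this]
    ring
  rw [h', Nat.cast_choose ℚ (by omega : n + 1 ≤ 2 * (n + 1))]
  unfold certG ss certP
  have : ((-1 : ℚ)) ^ (n + (n + 1)) = -1 := Odd.neg_one_pow ⟨n, by ring⟩
  rw [this]
  have e1 : 3 * n + 1 - (n + 1) = 2 * n := by omega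
  have e2 : 2 * n + 1 - (n + 1) = n := by omega
  have e3 : 3 * (n + 1) + 1 - (n + 1) = 2 * n + 1 + 1 + 1 := by omega
  have e4 : 2 * (n + 1) + 1 - (n + 1) = n + 1 + 1 := by omega
  have e5 : 2 * (n + 1) - (n + 1) = n + 1 := by omega
  have e6 : 2 * (n + 1) + 1 = 2 * n + 1 + 1 + 1 := by omega
  have e7 : 2 * (n + 1) = 2 * n + 1 + 1 := by omega
  rw [e1, e2, e3, e4, e5, e6, e7, Nat.factorial_succ (2 * n + 1 + 1),
    Nat.factorial_succ (2 * n + 1), Nat.factorial_succ (2 * n), Nat.factorial_succ (n + 1),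
    Nat.factorial_succ n]
  have h1 := Nat.factorial_ne_zero n
  have h2 := Nat.factorial_ne_zero (2 * n)
  push_cast
  have w1 : (2 * (n : ℚ) + 3 - (n + 1)) = n + 2 := by ring
  have w2 : (2 * (n : ℚ) + 2 - (n + 1)) = n + 1 := by ring
  rw [w1, w2]
  have q1 : (n + 1 : ℚ) ≠ 0 := by positivity
  have q2 : (n + 2 : ℚ) ≠ 0 := by positivity
  have q3 : (n + 1 + 1 : ℚ) ≠ 0 := by positivity
  field_simp
  ring

lemma sum_eq_WW (n : ℕ) :
    ∑ k ∈ Finset.range (n + 1), (21 * k + 8 : ℚ) * ((2 * k).choose k : ℚ) ^ 3 =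
      8 * (2 * n + 1) * ((2 * n).choose n : ℚ) * WW n := by
  induction n with
  | zero => simp [WW, ss]
  | succ n ih =>
    rw [Finset.sum_range_succ, ih]
    have h := WW_rec n
    have hc : ((n : ℚ) + 1) * ((2 * (n + 1)).choose (n + 1) : ℚ) =
        2 * (2 * n + 1) * ((2 * n).choose n : ℚ) := by
      have := Nat.succ_mul_centralBinom_succ n
      unfold Nat.centralBinom at this
      exact_mod_cast this
    push_cast
    linear_combination (-((2 * (n + 1)).choose (n + 1) : ℚ)) * h - 4 * WW n * hc

/-- `∑ (-1)^k C(p,k)^2 / C(p+m,k)` form. -/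
lemma sum_eq_form (m : ℕ) :
    ∑ k ∈ Finset.range (m + 1), (21 * k + 8 : ℚ) * ((2 * k).choose k : ℚ) ^ 3 =
      8 * (2 * m + 1) * ((-1) ^ m * ((2 * m).choose m : ℚ) * ((2 * m + 1 + m).choose m : ℚ)) *
      ∑ k ∈ Finset.range (m + 1),
        (-1) ^ k * ((2 * m + 1).choose k : ℚ) ^ 2 / ((2 * m + 1 + m).choose k : ℚ) := by
  rw [sum_eq_WW]
  have : WW m = (-1) ^ m * ((2 * m + 1 + m).choose m : ℚ) * ∑ k ∈ Finset.range (m + 1),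
        (-1) ^ k * ((2 * m + 1).choose k : ℚ) ^ 2 / ((2 * m + 1 + m).choose k : ℚ) := by
    unfold WW
    rw [Finset.mul_sum]
    refine Finset.sum_congr rfl fun k hk => ?_
    have hk' : k ≤ m := by simp at hk; omega
    rw [Nat.cast_choose ℚ (by omega : k ≤ 2 * m + 1),
      Nat.cast_choose ℚ (by omega : k ≤ 2 * m + 1 + m),
      Nat.cast_choose ℚ (by omega : m ≤ 2 * m + 1 + m), ss,
      show 2 * m + 1 + m - k = 3 * m + 1 - k by omega,
      show 2 * m + 1 + m - m = 2 * m + 1 by omega]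
    have h1 := Nat.factorial_ne_zero m
    have h2 := Nat.factorial_ne_zero k
    have h3 := Nat.factorial_ne_zero (2 * m + 1 - k)
    have h4 := Nat.factorial_ne_zero (2 * m + 1)
    have h5 := Nat.factorial_ne_zero (2 * m + 1 + m)
    have h6 := Nat.factorial_ne_zero (3 * m + 1 - k)
    rw [pow_add]
    field_simp
  rw [this]
  ring

/-- Alternating sum of inverse binomials, partial form. -/
lemma alt_inv (n K : ℕ) (hK : K ≤ n + 1) :
    ∑ j ∈ Finset.range K, (-1 : ℚ) ^ j / (n.choose j : ℚ) =
      (n + 1) / (n + 2) * (1 - (-1) ^ K / ((n + 1).choose K : ℚ)) := by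
  induction K with
  | zero => simp
  | succ K ih =>
    rw [Finset.sum_range_succ, ih (by omega)]
    obtain ⟨r, rfl⟩ := Nat.exists_eq_add_of_le (show K ≤ n by omega)
    rw [Nat.cast_choose ℚ (by omega : K ≤ K + r), Nat.cast_choose ℚ (by omega : K ≤ K + r + 1),
      Nat.cast_choose ℚ (by omega : K + 1 ≤ K + r + 1),
      show K + r - K = r by omega, show K + r + 1 - K = r + 1 by omega,
      show K + r + 1 - (K + 1) = r by omega, Nat.factorial_succ r, Nat.factorial_succ K,
      Nat.factorial_succ (K + r)]
    have h1 := Nat.factorial_ne_zero r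
    have h2 := Nat.factorial_ne_zero K
    have h3 := Nat.factorial_ne_zero (K + r)
    push_cast
    have q1 : (K + r + 1 : ℚ) ≠ 0 := by positivity
    have q2 : (K + r + 2 : ℚ) ≠ 0 := by positivity
    rw [pow_succ]
    field_simp
    ring

lemma u_eval (m : ℕ) :
    ∑ j ∈ Finset.range m, (-1 : ℚ) ^ (j + 1) / (((j : ℚ) + 1) ^ 2 * (m.choose (j + 1) : ℚ)) =
      ∑ j ∈ Finset.range m, (1 + 2 * (-1) ^ (j + 1)) / ((j : ℚ) + 1) ^ 2 := by
  induction m with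
  | zero => simp
  | succ m ih =>
    rw [Finset.sum_range_succ, Finset.sum_range_succ, ← ih]
    rcases m with _ | n
    · norm_num
    have key : ∑ j ∈ Finset.range (n + 1),
        (-1 : ℚ) ^ (j + 1) / (((j : ℚ) + 1) ^ 2 * ((n + 1 + 1).choose (j + 1) : ℚ)) =
        ∑ j ∈ Finset.range (n + 1),
        (-1 : ℚ) ^ (j + 1) / (((j : ℚ) + 1) ^ 2 * ((n + 1).choose (j + 1) : ℚ)) +
        1 / ((n + 1) * (n + 2)) * ∑ j ∈ Finset.range (n + 1), (-1 : ℚ) ^ j / (n.choose j : ℚ) := by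
      rw [Finset.mul_sum, ← Finset.sum_add_distrib]
      refine Finset.sum_congr rfl fun j hj => ?_
      have hj' : j ≤ n := by simp at hj; omega
      obtain ⟨r, rfl⟩ := Nat.exists_eq_add_of_le hj'
      rw [Nat.cast_choose ℚ (by omega : j ≤ j + r),
        Nat.cast_choose ℚ (by omega : j + 1 ≤ j + r + 1 + 1),
        Nat.cast_choose ℚ (by omega : j + 1 ≤ j + r + 1),
        show j + r - j = r by omega, show j + r + 1 + 1 - (j + 1) = r + 1 by omega,
        show j + r + 1 - (j + 1) = r by omega, Nat.factorial_succ r, Nat.factorial_succ j,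
        Nat.factorial_succ (j + r + 1), Nat.factorial_succ (j + r)]
      have h1 := Nat.factorial_ne_zero r
      have h2 := Nat.factorial_ne_zero j
      have h3 := Nat.factorial_ne_zero (j + r)
      push_cast
      have q1 : (j + r + 1 : ℚ) ≠ 0 := by positivity
      have q2 : (j + r + 2 : ℚ) ≠ 0 := by positivity
      have q3 : (j + r + 1 + 1 : ℚ) ≠ 0 := by positivity
      have q4 : (j + 1 : ℚ) ≠ 0 := by positivity
      rw [pow_succ]
      field_simp
      ring
    rw [key, alt_inv n (n + 1) le_rfl]
    simp only [Nat.choose_self]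
    push_cast
    have q1 : (n + 1 : ℚ) ≠ 0 := by positivity
    have q2 : (n + 2 : ℚ) ≠ 0 := by positivity
    have q3 : (n + 1 + 1 : ℚ) ≠ 0 := by positivity
    rw [pow_succ (-1 : ℚ) (n + 1)]
    field_simp
    ring

lemma euler_rec (n : ℕ) :
    ∑ j ∈ Finset.range (n + 1), (n.choose j : ℚ) * eulerNumber j * (1 + (-1) ^ (n - j)) =
      if n = 0 then 2 else 0 := by
  rcases n with _ | n
  · simp [eulerNumber]; norm_num
  · rw [Finset.sum_range_succ, eulerNumber, ← Finset.sum_attach (Finset.range (n + 1))]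
    simp only [Nat.choose_self, Nat.sub_self, pow_zero, Nat.cast_one, one_mul, Nat.succ_ne_zero,
      if_false]
    rw [neg_mul, Finset.sum_mul, ← sub_eq_add_neg, ← Finset.sum_sub_distrib]
    refine Finset.sum_eq_zero fun j _ => ?_
    have hj := Finset.mem_range.mp j.2
    rw [Nat.choose_symm (by omega : j.1 ≤ n + 1)]
    split_ifs with h
    · rw [h.neg_one_pow]; ring
    · rw [(Nat.not_even_iff_odd.mp h).neg_one_pow]; ring

/-- Rescaled Euler polynomial. -/
def PP (n : ℕ) (y : ℚ) : ℚ :=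
  ∑ j ∈ Finset.range (n + 1), (n.choose j : ℚ) * eulerNumber j * y ^ (n - j)

lemma pow_add_pow' (d n : ℕ) (hd : d ≤ n) (y : ℚ) : (y + 1) ^ d + (y - 1) ^ d =
    ∑ r ∈ Finset.range (n + 1), y ^ r * (d.choose r : ℚ) * (1 + (-1) ^ (d - r)) := by
  have h : ∑ r ∈ Finset.range (d + 1), y ^ r * (d.choose r : ℚ) * (1 + (-1) ^ (d - r)) =
      ∑ r ∈ Finset.range (n + 1), y ^ r * (d.choose r : ℚ) * (1 + (-1) ^ (d - r)) := by
    refine Finset.sum_subset (by intro x; simp; omega) fun x _ hx => ?_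
    rw [Nat.choose_eq_zero_of_lt (by simp at hx; omega)]; simp
  rw [← h, sub_eq_add_neg, add_pow, add_pow, ← Finset.sum_add_distrib]
  refine Finset.sum_congr rfl fun r _ => ?_
  rw [one_pow]; ring

lemma choose_swap (n j r : ℕ) (hj : j ≤ n) (hr : r ≤ n) :
    n.choose j * (n - j).choose r = n.choose r * (n - r).choose j := by
  by_cases h : j + r ≤ n
  · obtain ⟨t, rfl⟩ := Nat.exists_eq_add_of_le h
    have : ((j + r + t).choose j * (j + r + t - j).choose r : ℚ) =
        (j + r + t).choose r * (j + r + t - r).choose j := by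
      rw [show j + r + t - j = r + t by omega, show j + r + t - r = j + t by omega,
        Nat.cast_choose ℚ (by omega : j ≤ j + r + t), Nat.cast_choose ℚ (by omega : r ≤ r + t),
        Nat.cast_choose ℚ (by omega : r ≤ j + r + t), Nat.cast_choose ℚ (by omega : j ≤ j + t),
        show j + r + t - j = r + t by omega, show j + r + t - r = j + t by omega,
        show r + t - r = t by omega, show j + t - j = t by omega]
      have h1 := Nat.factorial_ne_zero j
      have h2 := Nat.factorial_ne_zero r
      have h3 := Nat.factorial_ne_zero t
      have h4 := Nat.factorial_ne_zero (r + t)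
      have h5 := Nat.factorial_ne_zero (j + t)
      field_simp
    exact_mod_cast this
  · rw [Nat.choose_eq_zero_of_lt (by omega : n - j < r),
      Nat.choose_eq_zero_of_lt (by omega : n - r < j)]; simp

lemma PP_add (n : ℕ) (y : ℚ) : PP n (y + 1) + PP n (y - 1) = 2 * y ^ n := by
  unfold PP
  rw [← Finset.sum_add_distrib]
  have h1 : ∀ j ∈ Finset.range (n + 1), (n.choose j : ℚ) * eulerNumber j * (y + 1) ^ (n - j) +
      (n.choose j : ℚ) * eulerNumber j * (y - 1) ^ (n - j) =
      ∑ r ∈ Finset.range (n + 1), y ^ r * (n.choose r : ℚ) *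
        (((n - r).choose j : ℚ) * eulerNumber j * (1 + (-1) ^ (n - r - j))) := by
    intro j hj
    rw [← mul_add, pow_add_pow' (n - j) n (by omega), Finset.mul_sum]
    refine Finset.sum_congr rfl fun r hr => ?_
    have := choose_swap n j r (by simp at hj; omega) (by simp at hr; omega)
    have this' : (n.choose j * (n - j).choose r : ℚ) = n.choose r * (n - r).choose j := by
      exact_mod_cast this
    rw [show n - r - j = n - j - r by omega]
    linear_combination (eulerNumber j * y ^ r * (1 + (-1) ^ (n - j - r))) * this'
  rw [Finset.sum_congr rfl h1, Finset.sum_comm]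
  have h2 : ∀ r ∈ Finset.range (n + 1), ∑ j ∈ Finset.range (n + 1), y ^ r * (n.choose r : ℚ) *
        (((n - r).choose j : ℚ) * eulerNumber j * (1 + (-1) ^ (n - r - j))) =
      if r = n then 2 * y ^ n else 0 := by
    intro r hr
    have hr' : r ≤ n := by simp at hr; omega
    rw [← Finset.mul_sum]
    have h : ∑ j ∈ Finset.range (n - r + 1),
        ((n - r).choose j : ℚ) * eulerNumber j * (1 + (-1) ^ (n - r - j)) =
        ∑ j ∈ Finset.range (n + 1),
        ((n - r).choose j : ℚ) * eulerNumber j * (1 + (-1) ^ (n - r - j)) := by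
      refine Finset.sum_subset (by intro x; simp; omega) fun x _ hx => ?_
      rw [Nat.choose_eq_zero_of_lt (by simp at hx; omega)]; simp
    rw [← h, euler_rec]
    by_cases hrn : r = n
    · subst hrn; simp; ring
    · rw [if_neg (by omega), if_neg hrn, mul_zero]
  rw [Finset.sum_congr rfl h2]
  simp

lemma PP_sum (n : ℕ) (hn : n ≠ 0) (he : Even n) (m : ℕ) :
    4 * 2 ^ n * ∑ j ∈ Finset.range m, (-1 : ℚ) ^ (j + 1) * ((j : ℚ) + 1) ^ n =
      (-1) ^ m * (PP n (2 * m + 1) + PP n (-(2 * m + 1))) := by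
  induction m with
  | zero =>
    have := PP_add n 0
    rw [zero_pow hn] at this
    simp at this ⊢
    linarith
  | succ m ih =>
    rw [Finset.sum_range_succ, mul_add, ih]
    have h1 := PP_add n (2 * (m + 1))
    have h2 := PP_add n (-(2 * (m + 1)))
    rw [he.neg_pow] at h2
    rw [mul_pow] at h1 h2
    push_cast
    rw [show -(2 * ((m : ℚ) + 1)) + 1 = -(2 * m + 1) by ring,
      show -(2 * ((m : ℚ) + 1)) - 1 = -(2 * (m + 1) + 1) by ring] at h2
    rw [show (2 * ((m : ℚ) + 1)) - 1 = (2 * m + 1) by ring] at h1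
    rw [pow_succ]
    linear_combination (-1) ^ m * (h1 + h2)

/-- The subring of `p`-integral rationals. -/
def Zp (p : ℕ) (hp : p.Prime) : Subring ℚ where
  carrier := {x | ¬ p ∣ x.den}
  mul_mem' := by
    intro a b ha hb h
    rcases (hp.dvd_mul).mp (h.trans (Rat.mul_den_dvd a b)) with h | h
    · exact ha h
    · exact hb h
  one_mem' := by
    simp only [Set.mem_ofPred_eq, Rat.den_one]
    exact hp.one_lt.ne' ∘ Nat.dvd_one.mp
  add_mem' := by
    intro a b ha hb h
    rcases (hp.dvd_mul).mp (h.trans (Rat.add_den_dvd a b)) with h | h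
    · exact ha h
    · exact hb h
  zero_mem' := by
    simp only [Set.mem_ofPred_eq, Rat.den_zero]
    exact hp.one_lt.ne' ∘ Nat.dvd_one.mp
  neg_mem' := by
    intro a ha
    simpa using ha

lemma Zp_inv (p : ℕ) (hp : p.Prime) (d : ℕ) (hd : ¬ p ∣ d) : ((d : ℚ))⁻¹ ∈ Zp p hp := by
  change ¬ p ∣ ((d : ℚ)⁻¹).den
  have hd0 : d ≠ 0 := by rintro rfl; simp at hd
  rwa [Rat.inv_natCast_den_of_pos (Nat.pos_of_ne_zero hd0)]

lemma Zp_final (p : ℕ) (hp : p.Prime) (r : ℕ) (x z : ℚ) (hz : z ∈ Zp p hp)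
    (h : x = p ^ r * z) : ((p ^ r : ℕ) : ℤ) ∣ x.num := by
  have hz' : ¬ p ∣ z.den := hz
  have h1 : x.num * z.den = (p ^ r : ℕ) * (z.num * x.den) := by
    have : (x.num : ℚ) * z.den = (p ^ r : ℕ) * (z.num * x.den) := by
      have a := Rat.num_div_den x
      have b := Rat.num_div_den z
      have c : (x.den : ℚ) ≠ 0 := by exact_mod_cast x.den_ne_zero
      have d : (z.den : ℚ) ≠ 0 := by exact_mod_cast z.den_ne_zero
      rw [← a, ← b] at h
      field_simp at h
      push_cast
      linarith
    exact_mod_cast this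
  have hc : IsCoprime ((p ^ r : ℕ) : ℤ) (z.den : ℤ) := by
    rw [Nat.isCoprime_iff_coprime]
    exact Nat.Coprime.pow_left _ ((hp.coprime_iff_not_dvd).mpr hz')
  exact hc.dvd_of_dvd_mul_right ⟨_, h1⟩

section
variable (p : ℕ) (hp : p.Prime)

lemma euler_mem (n : ℕ) : eulerNumber n ∈ Zp p hp := by
  induction n using Nat.strong_induction_on with
  | _ n ih =>
    rcases n with _ | n
    · rw [eulerNumber]; exact one_mem _
    · rw [eulerNumber]
      refine neg_mem (sum_mem fun j _ => ?_)
      split_ifs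
      · exact mul_mem (natCast_mem _ _) (ih _ (Finset.mem_range.mp j.2))
      · exact zero_mem _

/-- Congruence modulo `p^r` in `Zp`. -/
def Cg (r : ℕ) (a b : ℚ) : Prop := ∃ z ∈ Zp p hp, a - b = p ^ r * z

variable {p hp}

lemma Cg.sum {r : ℕ} {ι : Type} (s : Finset ι) (f g : ι → ℚ)
    (h : ∀ i ∈ s, Cg p hp r (f i) (g i)) : Cg p hp r (∑ i ∈ s, f i) (∑ i ∈ s, g i) := by
  classical
  choose! z hz hz' using h
  refine ⟨∑ i ∈ s, z i, sum_mem hz, ?_⟩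
  rw [← Finset.sum_sub_distrib, Finset.mul_sum]
  exact Finset.sum_congr rfl hz'

lemma Cg.mul_left {r : ℕ} {a b : ℚ} (c : ℚ) (hc : c ∈ Zp p hp) (h : Cg p hp r a b) :
    Cg p hp r (c * a) (c * b) := by
  obtain ⟨z, hz, e⟩ := h
  exact ⟨c * z, mul_mem hc hz, by linear_combination c * e⟩

lemma Cg.trans {r : ℕ} {a b c : ℚ} (h : Cg p hp r a b) (h' : Cg p hp r b c) : Cg p hp r a c := by
  obtain ⟨z, hz, e⟩ := h
  obtain ⟨y, hy, f⟩ := h'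
  exact ⟨z + y, add_mem hz hy, by linear_combination e + f⟩

lemma Cg.of_int {a b : ℤ} (h : a ≡ b [ZMOD p]) : Cg p hp 1 (a : ℚ) b := by
  obtain ⟨c, hc⟩ := h.symm.dvd
  refine ⟨c, intCast_mem _ _, ?_⟩
  rw [pow_one]
  exact_mod_cast hc

lemma not_dvd_of_lt {j : ℕ} (hj : j + 1 < p) : ¬ p ∣ j + 1 :=
  fun h => by have := Nat.le_of_dvd (by omega) h; omega

lemma inv_mem' {j : ℕ} (hj : j + 1 < p) : ((j : ℚ) + 1)⁻¹ ∈ Zp p hp := by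
  have := Zp_inv p hp (j + 1) (not_dvd_of_lt hj)
  push_cast at this
  exact this

/-- The product expansion. -/
lemma prod_cong (n : ℕ) (hn : n < p) :
    Cg p hp 3 ((-1) ^ n * ((p - 1).choose n : ℚ) * ((p + n).choose n : ℚ))
      (1 - p ^ 2 * ∑ j ∈ Finset.range n, 1 / ((j : ℚ) + 1) ^ 2) := by
  induction n with
  | zero => exact ⟨0, zero_mem _, by simp⟩
  | succ n ih =>
    obtain ⟨z, hz, e⟩ := ih (by omega)
    have h1 : (((p - 1).choose (n + 1) : ℕ) : ℚ) * (n + 1) = (p - 1).choose n * (p - 1 - n) := by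
      have := Nat.choose_succ_right_eq (p - 1) n
      have e2 : ((p - 1 - n : ℕ) : ℚ) = (p : ℚ) - 1 - n := by
        rw [Nat.cast_sub (by omega), Nat.cast_sub (by omega)]; simp
      rw [← e2]
      exact_mod_cast this
    have h2 : (((p + (n + 1)).choose (n + 1) : ℕ) : ℚ) * (n + 1) = (p + n + 1) * (p + n).choose n := by
      have := Nat.add_one_mul_choose_eq (p + n) n
      exact_mod_cast this.symm
    have hq : (n + 1 : ℚ) ≠ 0 := by positivity
    set s := ∑ j ∈ Finset.range n, 1 / ((j : ℚ) + 1) ^ 2 with hs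
    have hsm : s ∈ Zp p hp := by
      refine sum_mem fun j hj => ?_
      rw [one_div, ← inv_pow]
      exact pow_mem (inv_mem' (by simp at hj; omega)) _
    have hi := inv_mem' (hp := hp) hn
    refine ⟨z * (1 - p ^ 2 * (((n : ℚ) + 1)⁻¹) ^ 2) + p * s * (((n : ℚ) + 1)⁻¹) ^ 2, ?_, ?_⟩
    · refine add_mem (mul_mem hz (sub_mem (one_mem _) (mul_mem (pow_mem (natCast_mem _ _) _)
        (pow_mem hi _)))) (mul_mem (mul_mem (natCast_mem _ _) hsm) (pow_mem hi _))
    · rw [Finset.sum_range_succ, ← hs]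
      rw [← eq_div_iff hq] at h1 h2
      rw [h1, h2, pow_succ]
      field_simp
      field_simp at e
      linear_combination ((n + 1 : ℚ) ^ 2 - p ^ 2) * e

lemma choose_pred_sq (hp : p.Prime) (j : ℕ) (hj : j < p) :
    ∃ c : ℤ, (((p - 1).choose j : ℕ) : ℤ) = (-1) ^ j + p * c := by
  have hp1 := hp.one_lt
  induction j with
  | zero => exact ⟨0, by simp⟩
  | succ j ih =>
    obtain ⟨c, hc⟩ := ih (by omega)
    obtain ⟨d, hd⟩ := hp.dvd_choose_self (Nat.succ_ne_zero j) hj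
    have := Nat.choose_succ_succ (p - 1) j
    rw [Nat.succ_eq_add_one, Nat.succ_eq_add_one, show p - 1 + 1 = p by omega] at this
    rw [Nat.succ_eq_add_one] at hd
    refine ⟨d - c, ?_⟩
    rw [hd] at this
    have h3 : ((p : ℤ) * d) = ((p - 1).choose j : ℕ) + ((p - 1).choose (j + 1) : ℕ) := by
      exact_mod_cast this
    rw [pow_succ]
    linear_combination -h3 - hc

/-- Term congruence. -/
lemma term_cong (m j : ℕ) (hm : m < p) (hj : j < m) :
    Cg p hp 3 ((-1) ^ (j + 1) * (p.choose (j + 1) : ℚ) ^ 2 / ((p + m).choose (j + 1) : ℚ))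
      (p ^ 2 * ((-1 : ℚ) ^ (j + 1) / (((j : ℚ) + 1) ^ 2 * (m.choose (j + 1) : ℚ)))) := by
  have hp1 := hp.one_lt
  have : Fact p.Prime := ⟨hp⟩
  obtain ⟨c, hc⟩ := choose_pred_sq (hp := hp) j (by omega)
  have hL : ((p + m).choose (j + 1) : ℕ) ≡ (m.choose (j + 1)) [MOD p] := by
    have := Choose.choose_modEq_choose_mod_mul_choose_div_nat (p := p) (n := p + m) (k := j + 1)
    rw [Nat.add_mod_left, Nat.mod_eq_of_lt hm, Nat.mod_eq_of_lt (by omega : j + 1 < p),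
      Nat.div_eq_of_lt (by omega : j + 1 < p), Nat.choose_zero_right, mul_one] at this
    exact this
  have hmd : ¬ p ∣ m.choose (j + 1) := by
    intro h
    have h2 := Nat.choose_mul_factorial_mul_factorial (show j + 1 ≤ m by omega)
    have h3 : p ∣ m.factorial := by
      rw [← h2, mul_assoc]; exact h.mul_right _
    have := (hp.dvd_factorial).mp h3
    omega
  have hMd : ¬ p ∣ (p + m).choose (j + 1) := fun h => hmd ((hL.dvd_iff dvd_rfl).mp h)
  obtain ⟨v, hv⟩ := ((Int.natCast_modEq_iff.mpr hL).symm).dvd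
  have hv' : (((p + m).choose (j + 1) : ℕ) : ℚ) = (m.choose (j + 1) : ℕ) + p * v := by
    have : (((p + m).choose (j + 1) : ℕ) : ℤ) = (m.choose (j + 1) : ℕ) + p * v := by linarith
    exact_mod_cast this
  have hc' : (((p - 1).choose j : ℕ) : ℚ) = (-1) ^ j + p * c := by exact_mod_cast hc
  have hP : ((p.choose (j + 1) : ℕ) : ℚ) * (j + 1) = p * (p - 1).choose j := by
    have := Nat.add_one_mul_choose_eq (p - 1) j
    rw [show p - 1 + 1 = p by omega] at this
    exact_mod_cast this.symm
  have i1 := Zp_inv p hp _ hmd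
  have i2 := Zp_inv p hp _ hMd
  have i3 := inv_mem' (hp := hp) (show j + 1 < p by omega)
  have n1 : ((m.choose (j + 1) : ℕ) : ℚ) ≠ 0 := by
    intro h; rw [Nat.cast_eq_zero] at h; rw [h] at hmd; simp at hmd
  have n2 : (((p + m).choose (j + 1) : ℕ) : ℚ) ≠ 0 := by
    intro h; rw [Nat.cast_eq_zero] at h; rw [h] at hMd; simp at hMd
  have n3 : (j + 1 : ℚ) ≠ 0 := by positivity
  have hsq : ((-1 : ℚ) ^ j) ^ 2 = 1 := by rw [← pow_mul, mul_comm, pow_mul]; simp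
  have hm1 : ((-1 : ℚ)) ∈ Zp p hp := neg_mem (one_mem _)
  generalize hM : (((p + m).choose (j + 1) : ℕ) : ℚ) = M at *
  generalize hmm : ((m.choose (j + 1) : ℕ) : ℚ) = d at *
  have hdm : d ∈ Zp p hp := hmm ▸ natCast_mem _ _
  rw [← eq_div_iff n3] at hP
  refine ⟨(-1) ^ (j + 1) * ((2 * (-1) ^ j * c + p * c ^ 2) * d - v) *
    (((j : ℚ) + 1)⁻¹ ^ 2 * M⁻¹ * d⁻¹), ?_, ?_⟩
  · refine mul_mem (mul_mem (pow_mem hm1 _) (sub_mem (mul_mem (add_mem (mul_mem (mul_mem ?_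
      (pow_mem hm1 _)) (intCast_mem _ _)) (mul_mem (natCast_mem _ _) (pow_mem (intCast_mem _ _) _)))
      hdm) (intCast_mem _ _))) (mul_mem (mul_mem (pow_mem i3 _) i2) i1)
    exact_mod_cast natCast_mem (Zp p hp) 2
  · rw [hP, hc']
    generalize (-1 : ℚ) ^ (j + 1) = e at *
    generalize (-1 : ℚ) ^ j = f at *
    field_simp
    rw [hv']
    linear_combination (e * d) * hsq

lemma PP_cong (n : ℕ) (x : ℚ) (hx : Cg p hp 1 x 0) : Cg p hp 1 (PP n x) (eulerNumber n) := by
  obtain ⟨z, hz, e⟩ := hx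
  have ex : x = p * z := by linear_combination e
  have hxm : x ∈ Zp p hp := by rw [ex]; exact mul_mem (natCast_mem _ _) hz
  unfold PP
  rw [Finset.sum_range_succ]
  have : Cg p hp 1 (∑ j ∈ Finset.range n, (n.choose j : ℚ) * eulerNumber j * x ^ (n - j))
      (∑ j ∈ Finset.range n, 0) := by
    refine Cg.sum _ _ _ fun j hj => ?_
    refine ⟨(n.choose j : ℚ) * eulerNumber j * (z * x ^ (n - j - 1)), ?_, ?_⟩
    · exact mul_mem (mul_mem (natCast_mem _ _) (euler_mem p hp j)) (mul_mem hz (pow_mem hxm _))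
    · rw [show n - j = n - j - 1 + 1 by simp at hj; omega, pow_succ,
        show n - j - 1 + 1 - 1 = n - j - 1 by omega]
      nth_rewrite 2 [ex]
      ring
  obtain ⟨y, hy, f⟩ := this
  refine ⟨y, hy, ?_⟩
  simp at f ⊢
  exact f

lemma fermat_cong (hp : p.Prime) (a : ℕ) (ha : ¬ p ∣ a) : ∃ z : ℤ, (a : ℚ) ^ (p - 1) = 1 + p * z := by
  have h : (a : ℤ) ^ (p - 1) ≡ 1 [ZMOD p] := by
    apply Int.ModEq.pow_card_sub_one_eq_one hp
    rw [Nat.isCoprime_iff_coprime]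
    exact ((hp.coprime_iff_not_dvd).mpr ha).symm
  obtain ⟨z, hz⟩ := h.symm.dvd
  refine ⟨z, ?_⟩
  have : (a : ℤ) ^ (p - 1) = 1 + p * z := by linarith
  exact_mod_cast this

lemma Q_cong (m : ℕ) (hm : p = 2 * m + 1) (hp3 : 3 < p) :
    Cg p hp 1 (∑ j ∈ Finset.range m, (-1 : ℚ) ^ (j + 1) / ((j : ℚ) + 1) ^ 2)
      (2 * (-1) ^ m * eulerNumber (p - 3)) := by
  have hP := PP_sum (p - 3) (by omega) ⟨m - 1, by omega⟩ m
  have hpq : (2 * m + 1 : ℚ) = p := by rw [hm]; push_cast; ring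
  rw [hpq] at hP
  have c1 : Cg p hp 1 (PP (p - 3) p) (eulerNumber (p - 3)) :=
    PP_cong _ _ ⟨1, one_mem _, by simp⟩
  have c2 : Cg p hp 1 (PP (p - 3) (-p)) (eulerNumber (p - 3)) :=
    PP_cong _ _ ⟨-1, neg_mem (one_mem _), by simp⟩
  have c3 : Cg p hp 1 (∑ j ∈ Finset.range m, (-1 : ℚ) ^ (j + 1) / ((j : ℚ) + 1) ^ 2)
      (∑ j ∈ Finset.range m, (-1 : ℚ) ^ (j + 1) * ((j : ℚ) + 1) ^ (p - 3)) := by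
    refine Cg.sum _ _ _ fun j hj => ?_
    have hj' : j + 1 < p := by simp at hj; omega
    obtain ⟨z, hz⟩ := fermat_cong (hp := hp) (j + 1) (not_dvd_of_lt hj')
    refine ⟨(-1) ^ (j + 1) * (-z) * ((j : ℚ) + 1)⁻¹ ^ 2, ?_, ?_⟩
    · exact mul_mem (mul_mem (pow_mem (neg_mem (one_mem _)) _) (neg_mem (intCast_mem _ _)))
        (pow_mem (inv_mem' hj') _)
    · rw [show p - 1 = p - 3 + 2 by omega, pow_add] at hz
      push_cast at hz
      have n3 : (j + 1 : ℚ) ≠ 0 := by positivity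
      field_simp
      linear_combination -hz
  refine c3.trans ?_
  obtain ⟨z, hz⟩ := fermat_cong (hp := hp) 2 (fun h => by have := Nat.le_of_dvd (by omega) h; omega)
  rw [show p - 1 = p - 3 + 2 by omega, pow_add] at hz
  push_cast at hz
  obtain ⟨y1, hy1, e1⟩ := c1
  obtain ⟨y2, hy2, e2⟩ := c2
  have hS : ∑ j ∈ Finset.range m, (-1 : ℚ) ^ (j + 1) * ((j : ℚ) + 1) ^ (p - 3) ∈ Zp p hp := by
    refine sum_mem fun j _ => mul_mem (pow_mem (neg_mem (one_mem _)) _) (pow_mem ?_ _)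
    exact add_mem (natCast_mem _ _) (one_mem _)
  generalize (∑ j ∈ Finset.range m, (-1 : ℚ) ^ (j + 1) * ((j : ℚ) + 1) ^ (p - 3)) = S at *
  refine ⟨(-1) ^ m * (y1 + y2) - z * S, ?_, ?_⟩
  · exact sub_mem (mul_mem (pow_mem (neg_mem (one_mem _)) _) (add_mem hy1 hy2))
      (mul_mem (intCast_mem _ _) hS)
  · linear_combination hP - S * hz + (-1) ^ m * (e1 + e2)

end

theorem stmt7 (p : ℕ) (hp : p.Prime) (hp3 : 3 < p) :
    ratModEq (p ^ 4)
      (∑ k ∈ Finset.range ((p - 1) / 2 + 1), (21 * k + 8 : ℚ) * ((2 * k).choose k : ℚ) ^ 3)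
      (8 * p + (-1) ^ ((p - 1) / 2) * 32 * p ^ 3 * eulerNumber (p - 3)) := by
  obtain ⟨m, hm⟩ := hp.odd_of_ne_two (by omega)
  have hmm : (p - 1) / 2 = m := by omega
  rw [hmm]
  have hpq : (2 * m + 1 : ℚ) = p := by rw [hm]; push_cast; ring
  have h1 := sum_eq_form m
  rw [← hm, hpq, show 2 * m = p - 1 by omega] at h1
  have h2 := prod_cong (hp := hp) m (by omega)
  have h3 : Cg p hp 3 (∑ j ∈ Finset.range m,
      (-1) ^ (j + 1) * (p.choose (j + 1) : ℚ) ^ 2 / ((p + m).choose (j + 1) : ℚ))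
      (∑ j ∈ Finset.range m,
        p ^ 2 * ((-1 : ℚ) ^ (j + 1) / (((j : ℚ) + 1) ^ 2 * (m.choose (j + 1) : ℚ)))) :=
    Cg.sum _ _ _ fun j hj => term_cong m j (by omega) (Finset.mem_range.mp hj)
  rw [← Finset.mul_sum, u_eval] at h3
  have h4 := Q_cong (hp := hp) m hm hp3
  have h5 : ∑ j ∈ Finset.range m, (1 + 2 * (-1) ^ (j + 1)) / ((j : ℚ) + 1) ^ 2 =
      ∑ j ∈ Finset.range m, 1 / ((j : ℚ) + 1) ^ 2 +
      2 * ∑ j ∈ Finset.range m, (-1 : ℚ) ^ (j + 1) / ((j : ℚ) + 1) ^ 2 := by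
    rw [Finset.mul_sum, ← Finset.sum_add_distrib]
    exact Finset.sum_congr rfl fun j _ => by ring
  rw [h5] at h3
  rw [Finset.sum_range_succ' (fun k : ℕ =>
    (-1) ^ k * (p.choose k : ℚ) ^ 2 / ((p + m).choose k : ℚ))] at h1
  simp only [pow_zero, Nat.choose_zero_right, Nat.cast_one, one_pow, mul_one, div_one] at h1
  have hs1 : ∑ j ∈ Finset.range m, 1 / ((j : ℚ) + 1) ^ 2 ∈ Zp p hp := by
    refine sum_mem fun j hj => ?_
    rw [one_div, ← inv_pow]
    exact pow_mem (inv_mem' (by simp at hj; omega)) _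
  have hE := euler_mem p hp (p - 3)
  have hA : (-1) ^ m * ((p - 1).choose m : ℚ) * ((p + m).choose m : ℚ) ∈ Zp p hp :=
    mul_mem (mul_mem (pow_mem (neg_mem (one_mem _)) _) (natCast_mem _ _)) (natCast_mem _ _)
  unfold ratModEq
  obtain ⟨z2, hz2, e2⟩ := h2
  obtain ⟨z3, hz3, e3⟩ := h3
  obtain ⟨z4, hz4, e4⟩ := h4
  have hm1 : ((-1 : ℚ)) ∈ Zp p hp := neg_mem (one_mem _)
  have hpm : (p : ℚ) ∈ Zp p hp := natCast_mem _ _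
  have hn : ∀ n : ℕ, (n : ℚ) ∈ Zp p hp := fun n => natCast_mem _ n
  have h8 : (8 : ℚ) ∈ Zp p hp := by exact_mod_cast hn 8
  have h2' : (2 : ℚ) ∈ Zp p hp := by exact_mod_cast hn 2
  have h4' : (4 : ℚ) ∈ Zp p hp := by exact_mod_cast hn 4
  have hsg : (-1 : ℚ) ^ m ∈ Zp p hp := pow_mem hm1 _
  rw [h1]
  generalize (-1) ^ m * ((p - 1).choose m : ℚ) * ((p + m).choose m : ℚ) = A at *
  generalize (-1 : ℚ) ^ m = sg at *
  generalize eulerNumber (p - 3) = E at *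
  generalize ∑ j ∈ Finset.range m, 1 / ((j : ℚ) + 1) ^ 2 = s at *
  generalize ∑ j ∈ Finset.range m, (-1 : ℚ) ^ (j + 1) / ((j : ℚ) + 1) ^ 2 = Q at *
  generalize (∑ j ∈ Finset.range m,
      (-1) ^ (j + 1) * (p.choose (j + 1) : ℚ) ^ 2 / ((p + m).choose (j + 1) : ℚ)) = X at *
  have eA : A = 1 - p ^ 2 * s + p ^ 3 * z2 := by linear_combination e2
  have eX : X = p ^ 2 * (s + 2 * Q) + p ^ 3 * z3 := by linear_combination e3
  have eQ : Q = 2 * sg * E + p * z4 := by linear_combination e4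
  have hQ : Q ∈ Zp p hp := by
    rw [eQ]; exact add_mem (mul_mem (mul_mem h2' hsg) hE) (mul_mem hpm hz4)
  refine Zp_final p hp 4 _ (8 * (z2 + A * z3 + 2 * z4 + p * (s + 2 * Q) * (p * z2 - s))) ?_ ?_
  · exact mul_mem h8 (add_mem (add_mem (add_mem hz2 (mul_mem hA hz3)) (mul_mem h2' hz4))
      (mul_mem (mul_mem hpm (add_mem hs1 (mul_mem h2' hQ))) (sub_mem (mul_mem hpm hz2) hs1)))
  · rw [eX]
    linear_combination (8 * p + 8 * p ^ 3 * (s + 2 * Q)) * eA + 16 * p ^ 3 * eQ
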